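/- Let φ > 1 be an integer. There is a constant c > 0 with the following property. Let A be an oracle assigning a binary advice string to every feasible port-numbered graph, and let f be a function such that for every feasible port-numbered graph G with election index φ, the assignment v ↦ f(A(G), B^φ(v)) is a leader election output for G. Then there exist infinitely many integers n for which some n-node feasible port-numbered graph G with election index φ satisfies |A(G)| ≥ c·n·(log log n)²/log n. That is, leader election in time φ in graphs of election index φ requires advice of size Ω(n (log log n)²/log n). -/

import Mathlib

namespace Election

/-- A port-numbered graph: a simple undirected connected graph on `n ≥ 3` unlabeled nodes
(vertex set `Fin n`) in which, at each node `v` of degree `d`, the edges incident to `v`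
carry distinct port numbers `0, …, d-1` at `v`. `portNum v u` is the port number at `v`
of the edge `{v, u}` (meaningful only when `v` and `u` are adjacent). -/
structure PortGraph where
  n : ℕ
  three_le : 3 ≤ n
  G : SimpleGraph (Fin n)
  conn : G.Connected
  portNum : Fin n → Fin n → ℕ
  port_lt : ∀ v u : Fin n, G.Adj v u → portNum v u < Nat.card {w : Fin n // G.Adj v w}
  port_inj : ∀ v u w : Fin n, G.Adj v u → G.Adj v w → portNum v u = portNum v w → u = w

namespace PortGraph

/-- The degree of a node. -/
noncomputable def degree (PG : PortGraph) (v : Fin PG.n) : ℕ :=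
  Nat.card {w : Fin PG.n // PG.G.Adj v w}

open Classical in
/-- The neighbor of `v` reached through port `p` (junk value `v` if there is none). -/
noncomputable def nbr (PG : PortGraph) (v : Fin PG.n) (p : ℕ) : Fin PG.n :=
  if h : ∃ u : Fin PG.n, PG.G.Adj v u ∧ PG.portNum v u = p then h.choose else v

/-- Abstract (augmented truncated) views: a view at depth `0` is a leaf carrying a degree;
a view at depth `ℓ+1` is a node whose children are listed in the order of the port numbers
`0, …, d-1` at the root, each child carrying the port number at the other endpoint of the
corresponding edge together with the subview at depth `ℓ`. -/
inductive AugView : Type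
  | leaf (deg : ℕ) : AugView
  | node (children : List (ℕ × AugView)) : AugView

/-- The augmented truncated view `B^ℓ(v)` of node `v` at depth `ℓ`. -/
noncomputable def augView (PG : PortGraph) : ℕ → Fin PG.n → AugView
  | 0, v => AugView.leaf (PG.degree v)
  | (ℓ + 1), v => AugView.node ((List.range (PG.degree v)).map
      fun p => (PG.portNum (PG.nbr v p) v, PG.augView ℓ (PG.nbr v p)))

/-- `IsPath PG v s vs` means: the sequence `s = (p₁, q₁, …, p_k, q_k)` of port numbers codes
a path in `PG` starting at `v` whose i-th edge carries port `p_i` at the endpoint closer to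
`v` and `q_i` at the other endpoint, and `vs` is the list of visited vertices (from `v` on). -/
inductive IsPath (PG : PortGraph) : Fin PG.n → List ℕ → List (Fin PG.n) → Prop
  | nil (v : Fin PG.n) : IsPath PG v [] [v]
  | cons (v u : Fin PG.n) (p q : ℕ) (rest : List ℕ) (vs : List (Fin PG.n))
      (hadj : PG.G.Adj v u) (hp : PG.portNum v u = p) (hq : PG.portNum u v = q)
      (htail : IsPath PG u rest vs) : IsPath PG v (p :: q :: rest) (v :: vs)

/-- `P` is a leader election output for `PG`: every node `v` outputs a sequence of port
numbers coding a simple path starting at `v`, and all these paths end at a common node. -/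
def IsLeaderElection (PG : PortGraph) (P : Fin PG.n → List ℕ) : Prop :=
  ∃ leader : Fin PG.n, ∀ v : Fin PG.n, ∃ vs : List (Fin PG.n),
    PG.IsPath v (P v) vs ∧ vs.Nodup ∧ vs.getLast? = some leader

/-- A graph is feasible if at some depth all augmented truncated views are pairwise distinct. -/
def Feasible (PG : PortGraph) : Prop :=
  ∃ ℓ : ℕ, Function.Injective (PG.augView ℓ)

/-- The election index: the smallest depth at which all augmented truncated views are distinct. -/
noncomputable def electionIndex (PG : PortGraph) : ℕ :=
  sInf {ℓ : ℕ | Function.Injective (PG.augView ℓ)}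

/-- The diameter: the maximum distance between two nodes. -/
noncomputable def diam (PG : PortGraph) : ℕ :=
  sSup (Set.range fun p : Fin PG.n × Fin PG.n => PG.G.dist p.1 p.2)

end PortGraph


namespace PortGraph

variable {PG PG' : PortGraph}

theorem nbr_portNum {v u : Fin PG.n} (h : PG.G.Adj v u) : PG.nbr v (PG.portNum v u) = u := by
  have hex : ∃ w, PG.G.Adj v w ∧ PG.portNum v w = PG.portNum v u := ⟨u, h, rfl⟩
  unfold nbr
  rw [dif_pos hex]
  exact PG.port_inj v _ _ hex.choose_spec.1 h hex.choose_spec.2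

theorem nbr_spec (v : Fin PG.n) {p : ℕ} (hp : p < PG.degree v) :
    PG.G.Adj v (PG.nbr v p) ∧ PG.portNum v (PG.nbr v p) = p := by
  have hbij : Function.Bijective
      (fun w : {w : Fin PG.n // PG.G.Adj v w} =>
        (⟨PG.portNum v w, PG.port_lt v w w.2⟩ : Fin (PG.degree v))) := by
    rw [Nat.bijective_iff_injective_and_card]
    refine ⟨fun a b hab => Subtype.ext (PG.port_inj v a b a.2 b.2 (congrArg Fin.val hab)), ?_⟩
    rw [Nat.card_fin]; rfl
  obtain ⟨⟨w, hw⟩, hwp⟩ := hbij.2 ⟨p, hp⟩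
  have hwp' : PG.portNum v w = p := congrArg Fin.val hwp
  subst hwp'
  rw [nbr_portNum hw]
  exact ⟨hw, rfl⟩

/-- Nodes of equal degree have equal views as soon as their edges can be matched. -/
theorem augView_succ_eq {ℓ : ℕ} {v : Fin PG.n} {v' : Fin PG'.n}
    (hdeg : PG.degree v = PG'.degree v')
    (h : ∀ u, PG.G.Adj v u → ∃ u', PG'.G.Adj v' u' ∧ PG.portNum v u = PG'.portNum v' u' ∧
      PG.portNum u v = PG'.portNum u' v' ∧ PG.augView ℓ u = PG'.augView ℓ u') :
    PG.augView (ℓ + 1) v = PG'.augView (ℓ + 1) v' := by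
  simp only [augView, AugView.node.injEq, ← hdeg]
  refine List.map_congr_left fun p hp => ?_
  rw [List.mem_range] at hp
  obtain ⟨hadj, hport⟩ := nbr_spec v hp
  obtain ⟨u', hadj', h1, h2, h3⟩ := h _ hadj
  have : PG'.nbr v' p = u' := by rw [← hport, h1, nbr_portNum hadj']
  rw [this, h2, h3]

theorem degree_eq_of_augView_succ_eq {ℓ : ℕ} {v : Fin PG.n} {v' : Fin PG'.n}
    (h : PG.augView (ℓ + 1) v = PG'.augView (ℓ + 1) v') : PG.degree v = PG'.degree v' := by
  simp only [augView, AugView.node.injEq] at h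
  simpa using congrArg List.length h

/-- Equal views of positive depth match the edges at the two nodes. -/
theorem exists_adj_of_augView_succ_eq {ℓ : ℕ} {v u : Fin PG.n} {v' : Fin PG'.n}
    (h : PG.augView (ℓ + 1) v = PG'.augView (ℓ + 1) v') (hu : PG.G.Adj v u) :
    ∃ u', PG'.G.Adj v' u' ∧ PG.portNum v u = PG'.portNum v' u' ∧
      PG.portNum u v = PG'.portNum u' v' ∧ PG.augView ℓ u = PG'.augView ℓ u' := by
  have hdeg := degree_eq_of_augView_succ_eq h
  simp only [augView, AugView.node.injEq, ← hdeg] at h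
  have hlt : PG.portNum v u < PG.degree v := PG.port_lt v u hu
  have hp := List.map_inj_left.1 h _ (List.mem_range.2 hlt)
  rw [Prod.mk.injEq, nbr_portNum hu] at hp
  obtain ⟨hadj, hport⟩ := nbr_spec v' (hdeg ▸ hlt)
  exact ⟨_, hadj, hport.symm, hp.1, hp.2⟩

theorem augView_eq_of_succ {ℓ : ℕ} : ∀ {v : Fin PG.n} {v' : Fin PG'.n},
    PG.augView (ℓ + 1) v = PG'.augView (ℓ + 1) v' → PG.augView ℓ v = PG'.augView ℓ v' := by
  induction ℓ with
  | zero =>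
    intro v v' h
    simp only [augView, degree_eq_of_augView_succ_eq h]
  | succ ℓ ih =>
    intro v v' h
    refine augView_succ_eq (degree_eq_of_augView_succ_eq h) fun u hu => ?_
    obtain ⟨u', h1, h2, h3, h4⟩ := exists_adj_of_augView_succ_eq h hu
    exact ⟨u', h1, h2, h3, ih h4⟩

theorem augView_eq_of_le {ℓ m : ℕ} (hm : ℓ ≤ m) {v : Fin PG.n} {v' : Fin PG'.n}
    (h : PG.augView m v = PG'.augView m v') : PG.augView ℓ v = PG'.augView ℓ v' := by
  induction m, hm using Nat.le_induction with
  | base => exact h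
  | succ m _ ih => exact ih (augView_eq_of_succ h)

/-- The view at depth `ℓ` distinguishes `v` from all other nodes. -/
def Identified (PG : PortGraph) (ℓ : ℕ) (v : Fin PG.n) : Prop :=
  ∀ w, PG.augView ℓ v = PG.augView ℓ w → v = w

theorem Identified.mono {ℓ m : ℕ} (hm : ℓ ≤ m) {v : Fin PG.n} (h : PG.Identified ℓ v) :
    PG.Identified m v :=
  fun w hw => h w (augView_eq_of_le hm hw)

theorem Identified.of_adj {ℓ : ℕ} {v u : Fin PG.n} (h : PG.Identified ℓ u)
    (hvu : PG.G.Adj v u) : PG.Identified (ℓ + 1) v := by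
  intro w hw
  obtain ⟨u', h1, -, h3, h4⟩ := exists_adj_of_augView_succ_eq hw hvu
  obtain rfl := h u' h4
  exact PG.port_inj u v w hvu.symm h1.symm h3

end PortGraph

/-- If `f` numbers the elements satisfying `P` by `0, …, d-1`, there are `d` of them. -/
theorem card_subtype_of_numbering {α : Type*} {P : α → Prop} {f : α → ℕ} {d : ℕ}
    (hlt : ∀ a, P a → f a < d) (hinj : ∀ a b, P a → P b → f a = f b → a = b)
    (hsurj : ∀ p < d, ∃ a, P a ∧ f a = p) : Nat.card {a // P a} = d := by
  have hbij : Function.Bijective (fun a : {a // P a} => (⟨f a, hlt a a.2⟩ : Fin d)) := by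
    refine ⟨fun a b hab => Subtype.ext (hinj a b a.2 b.2 (by simpa using hab)), ?_⟩
    rintro ⟨p, hp⟩
    obtain ⟨a, ha, rfl⟩ := hsurj p hp
    exact ⟨⟨a, ha⟩, rfl⟩
  rw [Nat.card_congr (Equiv.ofBijective _ hbij), Nat.card_fin]

/-! ### The hard instances

For every `h : ZMod k` there is a unit consisting of a path `0, …, t` and of `x` triangles sharing
the node `0` of the path, the hub. The hubs form a clique. The identifier `h` of a unit is written
in binary into the port numbers of its triangles, and the ports between hubs encode the differences
of their values under a permutation `σ` of `ZMod k`. -/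

namespace Instance

abbrev Vertex (k x t : ℕ) : Type := ZMod k × (Fin (t + 1) ⊕ (Fin x × Bool))

variable {k x t : ℕ}

def bit (h : ZMod k) (j : ℕ) : ℕ := if h.val.testBit j then 1 else 0

theorem bit_le (h : ZMod k) (j : ℕ) : bit h j ≤ 1 := by
  unfold bit; split <;> omega

def Adj : Vertex k x t → Vertex k x t → Prop
  | (h, .inl d), (h', .inl d') =>
      (h = h' ∧ (d.val + 1 = d'.val ∨ d'.val + 1 = d.val)) ∨ (d.val = 0 ∧ d'.val = 0 ∧ h ≠ h')
  | (h, .inl d), (h', .inr _) => h = h' ∧ d.val = 0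
  | (h, .inr _), (h', .inl d) => h = h' ∧ d.val = 0
  | (h, .inr (j, s)), (h', .inr (j', s')) => h = h' ∧ j = j' ∧ s ≠ s'

def port (σ : Equiv.Perm (ZMod k)) : Vertex k x t → Vertex k x t → ℕ
  | (h, .inl d), (h', .inl d') =>
      if d.val = 0 then (if d'.val = 0 then 2 * x + (σ h' - σ h).val else 2 * x)
      else (if d'.val < d.val then 0 else 1)
  | (_, .inl _), (_, .inr (j, s)) => if s then x + j else j
  | (h, .inr (j, _)), (_, .inl _) => bit h j
  | (h, .inr (j, _)), (_, .inr _) => 1 - bit h j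

def deg : Vertex k x t → ℕ
  | (_, .inl d) => if d.val = 0 then 2 * x + k
      else (if d.val = t then 1 else 2)
  | (_, .inr _) => 2

theorem adj_symm : ∀ {v u : Vertex k x t}, Adj v u → Adj u v := by
  rintro ⟨h, d | ⟨j, s⟩⟩ ⟨h', d' | ⟨j', s'⟩⟩ <;> simp only [Adj] <;> grind

theorem adj_irrefl (v : Vertex k x t) : ¬ Adj v v := by
  obtain ⟨h, d | ⟨j, s⟩⟩ := v <;> simp [Adj]

section Ports

variable (σ : Equiv.Perm (ZMod k))

theorem port_lt_deg [NeZero k] (ht : 0 < t) :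
    ∀ {v u : Vertex k x t}, Adj v u → port σ v u < deg v := by
  rintro ⟨h, d | ⟨j, s⟩⟩ ⟨h', d' | ⟨j', s'⟩⟩ <;> simp only [Adj, port, deg]
  · have := ZMod.val_lt (σ h' - σ h)
    have := NeZero.pos k
    have := d.2
    have := d'.2
    split_ifs <;> omega
  · have := NeZero.pos k
    have := j'.2
    rintro ⟨-, h0⟩
    split_ifs <;> omega
  · have := bit_le h j
    omega
  · omega

theorem port_inj [NeZero k] {v u w : Vertex k x t} (hu : Adj v u) (hw : Adj v w)
    (h : port σ v u = port σ v w) : u = w := by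
  obtain ⟨a, d | ⟨j, s⟩⟩ := v <;> obtain ⟨b, e | ⟨i, r⟩⟩ := u <;>
    obtain ⟨c, f | ⟨l, q⟩⟩ := w <;> simp only [Adj, port] at hu hw h
  · have key : d.val = 0 → e.val = 0 → f.val = 0 → b = c := by
      intro h0 h1 h2
      simp only [h0, h1, h2, if_true, add_right_inj] at h
      have := ZMod.val_injective k h
      exact σ.injective (by simpa using this)
    have key1 : e.val = 0 → b ≠ a → 0 < (σ b - σ a).val := by
      intro _ hne
      rw [Nat.pos_iff_ne_zero, Ne, ZMod.val_eq_zero, sub_eq_zero]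
      exact fun hh => hne (σ.injective hh)
    have key2 : f.val = 0 → c ≠ a → 0 < (σ c - σ a).val := by
      intro _ hne
      rw [Nat.pos_iff_ne_zero, Ne, ZMod.val_eq_zero, sub_eq_zero]
      exact fun hh => hne (σ.injective hh)
    have : b = c ∧ e.val = f.val := by
      split_ifs at h <;> grind
    rw [this.1, Fin.ext this.2]
  · exfalso
    have := l.2
    split_ifs at h <;> omega
  · exfalso
    have := i.2
    split_ifs at h <;> omega
  · have := i.2
    have := l.2
    have : i.val = l.val ∧ r = q := by
      cases r <;> cases q <;> simp at h ⊢ <;> omega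
    rw [← hu.1, ← hw.1, Fin.ext this.1, this.2]
  · rw [← hu.1, ← hw.1, Fin.ext (hu.2.trans hw.2.symm)]
  · have := bit_le a j
    omega
  · have := bit_le a j
    omega
  · obtain ⟨rfl, rfl, h1⟩ := hu
    obtain ⟨rfl, rfl, h2⟩ := hw
    have : r = q := by cases s <;> cases r <;> cases q <;> simp_all
    rw [this]

theorem exists_port (ht : 0 < t) (v : Vertex k x t) (p : ℕ) (hp : p < deg v) :
    ∃ u, Adj v u ∧ port σ v u = p := by
  obtain ⟨h, d | ⟨j, s⟩⟩ := v <;> simp only [deg] at hp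
  · by_cases hd : d.val = 0
    · rw [if_pos hd] at hp
      by_cases h1 : p < x
      · exact ⟨(h, .inr (⟨p, h1⟩, false)), by simp [Adj, hd], by simp [port]⟩
      by_cases h2 : p < 2 * x
      · exact ⟨(h, .inr (⟨p - x, by omega⟩, true)), by simp [Adj, hd], by simp [port]; omega⟩
      by_cases h3 : p = 2 * x
      · exact ⟨(h, .inl ⟨1, by omega⟩), by simp [Adj, hd], by simp [port, hd, h3]⟩
      have hval : ((p - 2 * x : ℕ) : ZMod k).val = p - 2 * x := ZMod.val_cast_of_lt (by omega)
      refine ⟨(σ.symm (σ h + (p - 2 * x : ℕ)), .inl 0), ?_, ?_⟩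
      · refine Or.inr ⟨hd, rfl, fun hh => ?_⟩
        have hz := congrArg σ hh
        rw [Equiv.apply_symm_apply, left_eq_add] at hz
        rw [hz, ZMod.val_zero] at hval
        omega
      · simp only [port, hd, Fin.val_zero, if_true, Equiv.apply_symm_apply, add_sub_cancel_left,
          hval]
        omega
    · rw [if_neg hd] at hp
      have hd2 := d.2
      by_cases h1 : p = 0
      · exact ⟨(h, .inl ⟨d - 1, by omega⟩), Or.inl ⟨rfl, Or.inr (by simp only; omega)⟩,
          by simp only [port, if_neg hd]; rw [if_pos (by omega), h1]⟩
      · exact ⟨(h, .inl ⟨d + 1, by split_ifs at hp <;> omega⟩), Or.inl ⟨rfl, Or.inl rfl⟩,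
          by simp [port, hd]; split_ifs at hp <;> omega⟩
  · have := bit_le h j
    by_cases h1 : p = bit h j
    · exact ⟨(h, .inl 0), by simp [Adj], by simp [port, h1]⟩
    · exact ⟨(h, .inr (j, !s)), by simp [Adj], by simp [port]; omega⟩

end Ports

theorem natCard_adj [NeZero k] (ht : 0 < t) (v : Vertex k x t) :
    Nat.card {u // Adj v u} = deg v :=
  card_subtype_of_numbering (f := port (Equiv.refl _) v) (fun _ h => port_lt_deg _ ht h)
    (fun _ _ => port_inj _) (exists_port _ ht v)

/-- The displacement between units caused by leaving a node through port `p`. -/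
theorem perm_fst_eq_add [NeZero k] (hx : 0 < x) (σ : Equiv.Perm (ZMod k)) {v u : Vertex k x t}
    (h : Adj v u) : σ u.1 = σ v.1 + ((port σ v u - 2 * x : ℕ) : ZMod k) := by
  obtain ⟨a, d | ⟨j, s⟩⟩ := v <;> obtain ⟨b, e | ⟨i, r⟩⟩ := u <;> simp only [Adj, port] at h ⊢
  · split_ifs
    · simp
    all_goals
      have hab : a = b := by
        by_contra hne
        rcases h with h | h
        · exact hne h.1
        · omega
    · simp [hab]
    · simp [hab]
    · simp [hab, Nat.sub_eq_zero_of_le (show 1 ≤ 2 * x by omega)]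
  · have := i.2
    rw [← h.1, Nat.sub_eq_zero_of_le (by split_ifs <;> omega)]; simp
  · have := bit_le a j
    rw [← h.1, Nat.sub_eq_zero_of_le (by omega)]; simp
  · rw [← h.1, Nat.sub_eq_zero_of_le (by omega)]; simp

theorem reflTransGen_adj_zero [NeZero k] :
    ∀ v : Vertex k x t, Relation.ReflTransGen Adj v (0, .inl 0) := by
  have hline : ∀ (n : ℕ) (h : ZMod k) (d : Fin (t + 1)), d.val = n →
      Relation.ReflTransGen (Adj (x := x) (t := t)) (h, .inl d) (0, .inl 0) := by
    intro n
    induction n with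
    | zero =>
      intro h d hd
      obtain rfl : d = 0 := Fin.ext hd
      by_cases h0 : h = 0
      · rw [h0]
      · exact .single (Or.inr ⟨rfl, rfl, h0⟩)
    | succ n ih =>
      intro h d hd
      have := d.2
      refine .head (b := (h, .inl ⟨n, by omega⟩)) ?_ (ih h _ rfl)
      exact Or.inl ⟨rfl, Or.inr hd.symm⟩
  rintro ⟨h, d | ⟨j, s⟩⟩
  · exact hline _ h d rfl
  · refine .head (b := (h, .inl 0)) ?_ (hline _ h 0 rfl)
    exact ⟨rfl, rfl⟩

section Graph

variable [NeZero k]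

noncomputable def node : Vertex k x t ≃ Fin (Fintype.card (Vertex k x t)) := Fintype.equivFin _

def graph (k x t : ℕ) [NeZero k] : SimpleGraph (Fin (Fintype.card (Vertex k x t))) where
  Adj a b := Adj (node.symm a) (node.symm b)
  symm := ⟨fun _ _ h => adj_symm h⟩
  loopless := ⟨fun _ h => adj_irrefl _ h⟩

theorem graph_connected : (graph k x t).Connected := by
  have hroot : ∀ a, (graph k x t).Reachable a (node (0, .inl 0)) := by
    intro a
    obtain ⟨v, rfl⟩ := node.surjective a
    induction reflTransGen_adj_zero v using Relation.ReflTransGen.head_induction_on with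
    | refl => exact .refl _
    | head h _ ih => exact (SimpleGraph.Adj.reachable (by simpa [graph] using h)).trans ih
  exact ⟨fun a b => (hroot a).trans (hroot b).symm⟩

theorem natCard_graph_adj (ht : 0 < t) (a : Fin (Fintype.card (Vertex k x t))) :
    Nat.card {b // (graph k x t).Adj a b} = deg (node.symm a) := by
  rw [← natCard_adj ht]
  exact Nat.card_congr (node.symm.subtypeEquiv fun _ => Iff.rfl)

theorem card_vertex : Fintype.card (Vertex k x t) = k * (t + 1 + 2 * x) := by
  simp [ZMod.card, mul_comm]

noncomputable def portGraph (hx : 0 < x) (ht : 0 < t) (σ : Equiv.Perm (ZMod k)) : PortGraph where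
  n := Fintype.card (Vertex k x t)
  three_le := by
    rw [card_vertex]
    exact (show 3 ≤ t + 1 + 2 * x by omega).trans (Nat.le_mul_of_pos_left _ (NeZero.pos k))
  G := graph k x t
  conn := graph_connected
  portNum a b := port σ (node.symm a) (node.symm b)
  port_lt a b h := by
    rw [natCard_graph_adj ht]
    exact port_lt_deg σ ht h
  port_inj a b c hb hc h := node.symm.injective (port_inj σ hb hc h)

variable (hx : 0 < x) (ht : 0 < t) (σ σ' : Equiv.Perm (ZMod k))

noncomputable def vtx : Vertex k x t ≃ Fin (portGraph hx ht σ).n := node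

theorem adj_vtx {v u : Vertex k x t} :
    (portGraph hx ht σ).G.Adj (vtx hx ht σ v) (vtx hx ht σ u) ↔ Adj v u := by
  change Adj (node.symm (node v)) (node.symm (node u)) ↔ _
  rw [Equiv.symm_apply_apply, Equiv.symm_apply_apply]

theorem portNum_vtx (v u : Vertex k x t) :
    (portGraph hx ht σ).portNum (vtx hx ht σ v) (vtx hx ht σ u) = port σ v u := by
  change port σ (node.symm (node v)) (node.symm (node u)) = _
  rw [Equiv.symm_apply_apply, Equiv.symm_apply_apply]

theorem degree_vtx (v : Vertex k x t) : (portGraph hx ht σ).degree (vtx hx ht σ v) = deg v :=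
  (natCard_graph_adj ht (node v)).trans (by rw [Equiv.symm_apply_apply])

theorem augView_zero_vtx (v : Vertex k x t) :
    (portGraph hx ht σ).augView 0 (vtx hx ht σ v) = .leaf (deg v) :=
  congrArg _ (degree_vtx hx ht σ v)

/-- The views of a node of the path of a unit do not depend on `σ` as long as they do not extend
beyond the neighbors of the hub, and do not depend on the unit as long as they do not extend beyond
the hub. -/
theorem augView_line {ℓ : ℕ} : ∀ {d : Fin (t + 1)} {h h' : ZMod k},
    (ℓ ≤ d ∨ h = h' ∧ ℓ ≤ d + 1) →
    (portGraph hx ht σ).augView ℓ (vtx hx ht σ (h, .inl d)) =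
      (portGraph hx ht σ').augView ℓ (vtx hx ht σ' (h', .inl d)) := by
  induction ℓ with
  | zero =>
    intro d h h' _
    rw [augView_zero_vtx, augView_zero_vtx]
    simp [deg]
  | succ ℓ ih =>
    intro d h h' hℓ
    refine PortGraph.augView_succ_eq ?_ fun b hb => ?_
    · rw [degree_vtx, degree_vtx]
      simp [deg]
    obtain ⟨u, rfl⟩ := (vtx hx ht σ).surjective b
    have hu : Adj (h, .inl d) u := (adj_vtx hx ht σ).1 hb
    suffices hs : ∃ u', Adj (h', .inl d) u' ∧
        port σ (h, .inl d) u = port σ' (h', .inl d) u' ∧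
        port σ u (h, .inl d) = port σ' u' (h', .inl d) ∧
        (portGraph hx ht σ).augView ℓ (vtx hx ht σ u) = (portGraph hx ht σ').augView ℓ (vtx hx ht σ' u') by
      obtain ⟨u', h1, h2, h3, h4⟩ := hs
      refine ⟨vtx hx ht σ' u', (adj_vtx hx ht σ').2 h1, ?_, ?_, h4⟩
      · rw [portNum_vtx, portNum_vtx, h2]
      · rw [portNum_vtx, portNum_vtx, h3]
    by_cases hd : d.val = 0
    · obtain ⟨rfl, hℓ'⟩ := hℓ.resolve_left (by omega)
      have hl0 : ℓ = 0 := by omega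
      subst hl0
      obtain ⟨b, e | ⟨j, s⟩⟩ := u
      · by_cases he : e.val = 0
        · have hne : h ≠ b := by
            rcases hu with hu | hu
            · omega
            · exact hu.2.2
          refine ⟨(σ'.symm (σ' h + (σ b - σ h)), .inl e), Or.inr ⟨hd, he, ?_⟩, ?_, ?_, ?_⟩
          · intro hh
            have hz := congrArg σ' hh
            rw [Equiv.apply_symm_apply, left_eq_add, sub_eq_zero] at hz
            exact hne (σ.injective hz.symm)
          · simp [port, hd, he]
          · simp [port, hd, he]
          · rw [augView_zero_vtx, augView_zero_vtx]
            simp [deg]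
        · refine ⟨(b, .inl e), hu, by simp [port, hd, he], by simp [port, hd, he], ?_⟩
          rw [augView_zero_vtx, augView_zero_vtx]
      · refine ⟨(b, .inr (j, s)), hu, by simp [port], by simp [port], ?_⟩
        rw [augView_zero_vtx, augView_zero_vtx]
    · obtain ⟨b, e | ⟨j, s⟩⟩ := u
      · obtain ⟨rfl, hde⟩ := hu.resolve_right fun hu => hd hu.1
        refine ⟨(h', .inl e), Or.inl ⟨rfl, hde⟩, by simp [port, hd], by simp [port, hd], ih ?_⟩
        rcases hℓ with hℓ | ⟨rfl, hℓ⟩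
        · left; omega
        · right; exact ⟨rfl, by omega⟩
      · exact absurd hu.2 hd

theorem bit_injective (hk : k ≤ 2 ^ x) {h h' : ZMod k} (hb : ∀ j < x, bit h j = bit h' j) :
    h = h' := by
  apply ZMod.val_injective k
  apply Nat.eq_of_testBit_eq
  intro j
  by_cases hj : j < x
  · have := hb j hj
    unfold bit at this
    split_ifs at this <;> simp_all
  · have hlt : ∀ a : ZMod k, a.val < 2 ^ j := fun a =>
      (ZMod.val_lt a).trans_le (hk.trans (Nat.pow_le_pow_right (by omega) (by omega)))
    rw [Nat.testBit_lt_two_pow (hlt h), Nat.testBit_lt_two_pow (hlt h')]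

theorem hub_identified (hk : k ≤ 2 ^ x) (h : ZMod k) :
    (portGraph hx ht σ).Identified 1 (vtx hx ht σ (h, .inl 0)) := by
  intro b hb
  obtain ⟨w, rfl⟩ := (vtx hx ht σ).surjective b
  have hdeg := PortGraph.degree_eq_of_augView_succ_eq hb
  rw [degree_vtx, degree_vtx] at hdeg
  have hkpos := NeZero.pos k
  obtain ⟨h', d | ⟨j, s⟩⟩ := w
  · have hd : d = 0 := by
      simp only [deg] at hdeg
      by_contra hd
      have : d.val ≠ 0 := fun h0 => hd (Fin.ext h0)
      simp only [Fin.val_zero, if_true, if_neg this] at hdeg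
      split_ifs at hdeg <;> omega
    subst hd
    suffices h = h' by rw [this]
    refine bit_injective hk fun j hj => ?_
    have hadj : (portGraph hx ht σ).G.Adj (vtx hx ht σ (h, .inl 0)) (vtx hx ht σ (h, .inr (⟨j, hj⟩, false))) := by
      simp [adj_vtx, Adj]
    have hadj' :
        (portGraph hx ht σ).G.Adj (vtx hx ht σ (h', .inl 0)) (vtx hx ht σ (h', .inr (⟨j, hj⟩, false))) := by
      simp [adj_vtx, Adj]
    obtain ⟨u, h1, h2, h3, -⟩ := PortGraph.exists_adj_of_augView_succ_eq hb hadj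
    obtain rfl := (portGraph hx ht σ).port_inj _ _ _ h1 hadj'
      (h2.symm.trans (by simp [portNum_vtx, port]))
    simpa [portNum_vtx, port] using h3
  · simp only [deg, Fin.val_zero, if_true] at hdeg
    omega

theorem augView_injective (hk : k ≤ 2 ^ x) :
    Function.Injective ((portGraph hx ht σ).augView (t + 1)) := by
  suffices ∀ v, (portGraph hx ht σ).Identified (t + 1) (vtx hx ht σ v) by
    intro a b hab
    obtain ⟨v, rfl⟩ := (vtx hx ht σ).surjective a
    exact this v b hab
  have hline : ∀ (n : ℕ) (h : ZMod k) (d : Fin (t + 1)), d.val = n →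
      (portGraph hx ht σ).Identified (n + 1) (vtx hx ht σ (h, .inl d)) := by
    intro n
    induction n with
    | zero =>
      intro h d hd
      obtain rfl : d = 0 := Fin.ext hd
      exact hub_identified hx ht σ hk h
    | succ n ih =>
      intro h d hd
      have := d.2
      refine (ih h ⟨n, by omega⟩ rfl).of_adj ?_
      simp [adj_vtx, Adj, hd]
  rintro ⟨h, d | ⟨j, s⟩⟩
  · exact (hline _ h d rfl).mono (by have := d.2; omega)
  · have hid := (hline 0 h 0 rfl).of_adj (v := vtx hx ht σ (h, .inr (j, s)))
      (by simp [adj_vtx, Adj])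
    exact hid.mono (by omega)

theorem electionIndex_portGraph (hk : k ≤ 2 ^ x) (hk1 : 1 < k) :
    (portGraph hx ht σ).electionIndex = t + 1 := by
  have hmem : t + 1 ∈ {ℓ | Function.Injective ((portGraph hx ht σ).augView ℓ)} :=
    augView_injective hx ht σ hk
  refine le_antisymm (Nat.sInf_le hmem) ?_
  by_contra hlt
  have hinj := Nat.sInf_mem ⟨_, hmem⟩
  set ℓ := sInf {ℓ | Function.Injective ((portGraph hx ht σ).augView ℓ)} with hℓ
  have hle : ℓ ≤ t := by
    change ¬ (t + 1 ≤ ℓ) at hlt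
    omega
  have heq := hinj (augView_line hx ht σ σ (d := Fin.last t) (h := 0) (h' := 1) (Or.inl hle))
  have : Fact (1 < k) := ⟨hk1⟩
  have h01 := congrArg Prod.fst ((vtx hx ht σ).injective heq)
  exact zero_ne_one h01

/-- The displacement between units along a walk with the given ports. -/
def displacement (k x : ℕ) : List ℕ → ZMod k
  | [] => 0
  | [_] => 0
  | p :: _ :: rest => ((p - 2 * x : ℕ) : ZMod k) + displacement k x rest

theorem perm_getLast_eq_add {a b : Fin (portGraph hx ht σ).n} {s : List ℕ}
    {vs : List (Fin (portGraph hx ht σ).n)} (h : (portGraph hx ht σ).IsPath a s vs)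
    (hb : vs.getLast? = some b) :
    σ ((vtx hx ht σ).symm b).1 = σ ((vtx hx ht σ).symm a).1 + displacement k x s := by
  induction h with
  | nil v =>
    obtain rfl : v = b := by simpa using hb
    simp [displacement]
  | cons v u p q rest vs hadj hp hq htail ih =>
    have hvs : vs ≠ [] := by cases htail <;> simp
    obtain ⟨c, cs, rfl⟩ := List.exists_cons_of_ne_nil hvs
    rw [List.getLast?_cons_cons] at hb
    rw [ih hb, displacement, ← add_assoc]
    have := perm_fst_eq_add hx σ (v := (vtx hx ht σ).symm v) (u := (vtx hx ht σ).symm u) hadj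
    rw [this, ← hp]
    rfl

/-- Two of the instances with the same advice agree up to a rotation. -/
theorem perm_eq_of_advice_eq (hk : k ≤ 2 ^ x) (hk1 : 1 < k)
    {A : PortGraph → List Bool} {f : List Bool → PortGraph.AugView → List ℕ}
    (hA : ∀ PG : PortGraph, PG.Feasible → PG.electionIndex = t + 1 →
      PG.IsLeaderElection (fun v => f (A PG) (PG.augView (t + 1) v)))
    (heq : A (portGraph hx ht σ) = A (portGraph hx ht σ')) (h0 : σ 0 = σ' 0) : σ = σ' := by
  obtain ⟨a, ha⟩ := hA (portGraph hx ht σ) ⟨_, augView_injective hx ht σ hk⟩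
    (electionIndex_portGraph hx ht σ hk hk1)
  obtain ⟨a', ha'⟩ := hA (portGraph hx ht σ') ⟨_, augView_injective hx ht σ' hk⟩
    (electionIndex_portGraph hx ht σ' hk hk1)
  obtain ⟨c, hc⟩ : ∃ c, ∀ h, σ h - σ' h = c := by
    refine ⟨σ ((vtx hx ht σ).symm a).1 - σ' ((vtx hx ht σ').symm a').1, fun h => ?_⟩
    obtain ⟨vs, hp, -, hl⟩ := ha (vtx hx ht σ (h, .inl (Fin.last t)))
    obtain ⟨vs', hp', -, hl'⟩ := ha' (vtx hx ht σ' (h, .inl (Fin.last t)))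
    have e1 := perm_getLast_eq_add hx ht σ hp hl
    have e2 := perm_getLast_eq_add hx ht σ' hp' hl'
    have hview := augView_line hx ht σ σ' (ℓ := t + 1) (d := Fin.last t) (h := h) (h' := h)
      (Or.inr ⟨rfl, le_rfl⟩)
    simp only [hview, heq, Equiv.symm_apply_apply] at e1 e2
    rw [e1, e2]
    simp
  have hc0 : c = 0 := by rw [← hc 0, h0, sub_self]
  ext h
  rw [sub_eq_zero.1 ((hc h).trans hc0)]

end Graph

end Instance

theorem two_pow_mul_lt_factorial {y : ℕ} (hy : 1 ≤ y) :
    2 ^ (2 ^ y * (y + 3)) * 2 ^ (y + 3) < (2 ^ (y + 3)).factorial := by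
  have h1 := Nat.factorial_mul_pow_sub_le_factorial
    (show 2 ^ (y + 2) ≤ 2 ^ (y + 3) from Nat.pow_le_pow_right (by omega) (by omega))
  have h2 : 2 ^ (y + 3) - 2 ^ (y + 2) = 4 * 2 ^ y := by rw [pow_add, pow_add]; omega
  rw [h2, ← pow_mul] at h1
  refine lt_of_lt_of_le ?_ ((Nat.le_mul_of_pos_left _ (Nat.factorial_pos _)).trans h1)
  rw [← pow_add]
  refine Nat.pow_lt_pow_right (by omega) ?_
  have : y < 2 ^ y := Nat.lt_two_pow_self
  nlinarith

/-- Up to few collisions, an assignment of binary strings to many elements uses a long string. -/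
theorem exists_le_length_of_injective {α β : Type*} [Fintype α] [Fintype β] {L : ℕ}
    (g : α → List Bool) (r : α → β) (hinj : Function.Injective fun a => (g a, r a))
    (hcard : 2 ^ L * Fintype.card β < Fintype.card α) : ∃ a, L ≤ (g a).length := by
  by_contra! hlt
  let F : α → (Σ i : Fin L, List.Vector Bool i) × β := fun a => (⟨⟨_, hlt a⟩, ⟨g a, rfl⟩⟩, r a)
  have hF : Function.Injective F := by
    intro a b hab
    refine hinj (Prod.ext ?_ (congrArg (fun z => z.2) hab))
    exact congrArg (fun z : (Σ i : Fin L, List.Vector Bool i) × β => z.1.2.toList) hab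
  have h1 := Fintype.card_le_of_injective F hF
  rw [Fintype.card_prod, Fintype.card_sigma] at h1
  have h2 : ∑ i : Fin L, Fintype.card (List.Vector Bool i) ≤ 2 ^ L := by
    simp only [card_vector, Fintype.card_bool]
    rw [Fin.sum_univ_eq_sum_range fun i => 2 ^ i, Nat.geomSum_eq le_rfl]
    simp
  exact absurd (h1.trans (Nat.mul_le_mul_right _ h2)) (not_le.2 hcard)

theorem logb_sq_div_le {z : ℝ} (hz : 1 ≤ z) : Real.logb 2 z ^ 2 / z ≤ 9 := by
  have h1 : Real.log z ≤ 2 * Real.sqrt z := by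
    have := Real.log_le_self (Real.sqrt_nonneg z)
    rw [Real.log_sqrt (by linarith)] at this
    linarith
  have h0 : 0 ≤ Real.log z := Real.log_nonneg hz
  have h2 := Real.log_two_gt_d9
  have hs := Real.sq_sqrt (show 0 ≤ z by linarith)
  rw [div_le_iff₀ (by linarith), Real.logb, div_pow, div_le_iff₀ (by positivity)]
  have h3 : Real.log z ^ 2 ≤ 4 * z := by nlinarith
  have h4 : (4 : ℝ) ≤ 9 * Real.log 2 ^ 2 := by nlinarith
  nlinarith

/-- For any fixed election index `φ > 1`, leader election in time `φ` in graphs of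
election index `φ` requires advice of size `Ω(n (log log n)² / log n)`. -/
theorem advice_lower_bound_index_phi (φ : ℕ) (hφ : 1 < φ) :
    ∃ c : ℝ, 0 < c ∧
      ∀ (A : PortGraph → List Bool) (f : List Bool → PortGraph.AugView → List ℕ),
        (∀ PG : PortGraph, PG.Feasible → PG.electionIndex = φ →
          PG.IsLeaderElection (fun v => f (A PG) (PG.augView φ v))) →
        ∀ N : ℕ, ∃ n : ℕ, N ≤ n ∧ ∃ PG : PortGraph, PG.n = n ∧ PG.Feasible ∧
          PG.electionIndex = φ ∧
          c * (n : ℝ) * (Real.logb 2 (Real.logb 2 (n : ℝ)))^2 / Real.logb 2 (n : ℝ)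
            ≤ ((A PG).length : ℝ) := by
  obtain ⟨t, rfl⟩ : ∃ t, φ = t + 1 := ⟨φ - 1, by omega⟩
  have ht : 0 < t := by omega
  refine ⟨1 / (72 * (t + 3)), by positivity, fun A f hA N => ?_⟩
  set y := N + 1 with hy
  set k := 2 ^ (y + 3) with hk
  have : NeZero k := ⟨by positivity⟩
  have hx : 0 < y + 3 := by omega
  have hk1 : 1 < k := Nat.one_lt_two_pow (by omega)
  obtain ⟨σ, hσ⟩ := exists_le_length_of_injective (L := 2 ^ y * (y + 3))
    (fun σ : Equiv.Perm (ZMod k) => A (Instance.portGraph hx ht σ)) (fun σ => σ 0)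
    (fun σ σ' h => Instance.perm_eq_of_advice_eq hx ht σ σ' le_rfl hk1 hA
      (congrArg Prod.fst h) (congrArg Prod.snd h))
    (by
      rw [Fintype.card_perm, ZMod.card]
      exact two_pow_mul_lt_factorial (by omega))
  have hn : (Instance.portGraph hx ht σ).n = k * (t + 1 + 2 * (y + 3)) := Instance.card_vertex
  have hkn : k ≤ k * (t + 1 + 2 * (y + 3)) := Nat.le_mul_of_pos_right _ (by omega)
  have hyk : y + 3 < k := Nat.lt_two_pow_self
  refine ⟨_, by omega, _, hn, ⟨_, Instance.augView_injective hx ht σ le_rfl⟩,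
    Instance.electionIndex_portGraph hx ht σ le_rfl hk1, le_trans ?_ (Nat.cast_le.2 hσ)⟩
  set n := k * (t + 1 + 2 * (y + 3)) with hn'
  have hlog : 1 ≤ Real.logb 2 n := by
    rw [Real.le_logb_iff_rpow_le one_lt_two (by exact_mod_cast (by omega : 0 < n)), Real.rpow_one]
    exact_mod_cast (by omega : 2 ≤ n)
  have hbound : (n : ℝ) ≤ 2 ^ y * 8 * ((y + 3) * (t + 3)) := by
    have : n ≤ 2 ^ y * 8 * ((y + 3) * (t + 3)) := by
      rw [hn', hk, pow_add]
      refine Nat.mul_le_mul_left _ ?_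
      nlinarith
    exact_mod_cast this
  have h9 := logb_sq_div_le hlog
  calc _ = 1 / (72 * ((t : ℝ) + 3)) * n *
        (Real.logb 2 (Real.logb 2 n) ^ 2 / Real.logb 2 n) := by rw [mul_div_assoc]
    _ ≤ 1 / (72 * ((t : ℝ) + 3)) * (2 ^ y * 8 * ((y + 3) * (t + 3))) * 9 := by gcongr
    _ = _ := by
      push_cast
      field_simp
      ring

end Election
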